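/- Let f″(z) = Σ_{p odd prime} p(p−1)·z^{p−2} for 0 < z < 1. Then f″(e^{−t}) ~ 2/(t³·log(1/t)) as t → 0⁺; that is, Σ_{p odd prime} p(p−1)·e^{−(p−2)t}, multiplied by t³·log(1/t), tends to 2 as t decreases to 0. -/

import Mathlib

open Filter Topology Asymptotics MeasureTheory

/-- `Q2 k` is the number of Goldbach partitions of `2*k`, i.e. the number of
unordered pairs `{p, q}` of odd primes with `p + q = 2*k`. -/
def Q2 (k : ℕ) : ℕ :=
  ((Finset.range (2 * k + 1) ×ˢ Finset.range (2 * k + 1)).filter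
    (fun pq => pq.1.Prime ∧ pq.2.Prime ∧ Odd pq.1 ∧ Odd pq.2 ∧
      pq.1 ≤ pq.2 ∧ pq.1 + pq.2 = 2 * k)).card

/-- `fOdd z = Σ_{p odd prime} z^p`. -/
noncomputable def fOdd (z : ℝ) : ℝ := ∑' p : ℕ, if p.Prime ∧ Odd p then z ^ p else 0

/-- `fOdd' z = Σ_{p odd prime} p * z^(p-1)`, the derivative of `fOdd` on `(0,1)`. -/
noncomputable def fOdd' (z : ℝ) : ℝ :=
  ∑' p : ℕ, if p.Prime ∧ Odd p then (p : ℝ) * z ^ (p - 1) else 0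

/-- `fOdd'' z = Σ_{p odd prime} p * (p-1) * z^(p-2)`, the second derivative of `fOdd` on `(0,1)`. -/
noncomputable def fOdd'' (z : ℝ) : ℝ :=
  ∑' p : ℕ, if p.Prime ∧ Odd p then (p : ℝ) * ((p : ℝ) - 1) * z ^ (p - 2) else 0

/-- The prime-counting function at a real argument: the number of primes `≤ y`. -/
noncomputable def primePi (y : ℝ) : ℕ := Nat.primeCounting ⌊y⌋₊

namespace PNTAux

open ArithmeticFunction

lemma summable_int_weight : Summable (fun k : ℤ => 1 / (1 + (k : ℝ) ^ 2)) := by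
  have h := (Real.summable_one_div_int_pow (p := 2)).2 (by norm_num)
  refine Summable.of_norm_bounded_eventually h ?_
  have : ∀ᶠ k : ℤ in cofinite, k ≠ 0 := by
    rw [eventually_cofinite]; simp
  filter_upwards [this] with k hk
  have hk' : (k : ℝ) ≠ 0 := by exact_mod_cast hk
  rw [Real.norm_of_nonneg (by positivity)]
  apply one_div_le_one_div_of_le (by positivity)
  linarith

lemma fiber_bound (y : ℝ) (k : ℤ) (s : Finset ℕ)
    (hs : ∀ n ∈ s, ⌊Real.log n - y⌋ = k) :
    ∑ n ∈ s, vonMangoldt n / n * (1 / (1 + (Real.log n - y) ^ 2)) ≤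
      ((Real.log 4 + 4) * Real.exp 1 * 3) * (1 / (1 + (k : ℝ) ^ 2)) := by
  have h1 : ∀ n ∈ s, vonMangoldt n / n * (1 / (1 + (Real.log n - y) ^ 2)) ≤
      vonMangoldt n * (Real.exp (-(y + k)) * (3 / (1 + (k : ℝ) ^ 2))) := by
    intro n hn
    rcases Nat.eq_zero_or_pos n with rfl | hpos
    · simp
    have hn' : (0 : ℝ) < n := by exact_mod_cast hpos
    have hf := Int.floor_eq_iff.1 (hs n hn)
    set u := Real.log n - y with hu
    rw [div_eq_mul_inv, mul_assoc]
    apply mul_le_mul_of_nonneg_left _ vonMangoldt_nonneg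
    apply mul_le_mul
    · rw [Real.exp_neg]
      apply inv_anti₀ (Real.exp_pos _)
      rw [← Real.le_log_iff_exp_le hn']
      linarith [hf.1]
    · rw [div_le_div_iff₀ (by positivity) (by positivity)]
      nlinarith [hf.1, hf.2, sq_nonneg (u - 2 * (u - k)), sq_nonneg (u-k), sq_nonneg (u + (u-k))]
    · positivity
    · positivity
  refine (Finset.sum_le_sum h1).trans ?_
  rw [← Finset.sum_mul]
  have h2 : ∑ n ∈ s, vonMangoldt n ≤ (Real.log 4 + 4) * Real.exp (y + k + 1) := by
    refine le_trans ?_ (Chebyshev.psi_le_const_mul_self (Real.exp_pos _).le)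
    rw [Chebyshev.psi_eq_sum_Icc]
    apply Finset.sum_le_sum_of_subset_of_nonneg
    · intro n hn
      rw [Finset.mem_Icc]
      refine ⟨Nat.zero_le _, Nat.le_floor ?_⟩
      rcases Nat.eq_zero_or_pos n with rfl | hpos
      · simpa using (Real.exp_pos _).le
      have hn' : (0 : ℝ) < n := by exact_mod_cast hpos
      have hf := Int.floor_eq_iff.1 (hs n hn)
      rw [← Real.log_le_iff_le_exp hn']
      linarith [hf.2]
    · intros; exact vonMangoldt_nonneg
  refine (mul_le_mul_of_nonneg_right h2 (by positivity)).trans (le_of_eq ?_)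
  have : Real.exp (y + k + 1) * Real.exp (-(y + k)) = Real.exp 1 := by
    rw [← Real.exp_add]; congr 1; ring
  calc _ = (Real.log 4 + 4) * (Real.exp (y + k + 1) * Real.exp (-(y + k))) * (3 / (1 + (k : ℝ) ^ 2)) := by ring
    _ = _ := by rw [this]; ring

/-- Uniform Chebyshev bound. -/
lemma cheb_bound : ∃ B : ℝ, 0 < B ∧ ∀ y : ℝ,
    Summable (fun n : ℕ => vonMangoldt n / n * (1 / (1 + (Real.log n - y) ^ 2))) ∧
    ∑' n : ℕ, vonMangoldt n / n * (1 / (1 + (Real.log n - y) ^ 2)) ≤ B := by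
  set C := ((Real.log 4 + 4) * Real.exp 1 * 3) with hC
  have hCpos : 0 < C := by
    have := Real.log_pos (show (1:ℝ) < 4 by norm_num)
    positivity
  have hS0 : 0 < ∑' k : ℤ, 1 / (1 + (k : ℝ) ^ 2) :=
    summable_int_weight.tsum_pos (fun k => by positivity) 0 (by norm_num)
  refine ⟨C * ∑' k : ℤ, 1 / (1 + (k : ℝ) ^ 2), by positivity, fun y => ?_⟩
  have hnn : ∀ n : ℕ, 0 ≤ vonMangoldt n / n * (1 / (1 + (Real.log n - y) ^ 2)) := fun n => by
    have : 0 ≤ vonMangoldt n := vonMangoldt_nonneg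
    positivity
  have hb : ∀ s : Finset ℕ, ∑ n ∈ s, vonMangoldt n / n * (1 / (1 + (Real.log n - y) ^ 2)) ≤
      C * ∑' k : ℤ, 1 / (1 + (k : ℝ) ^ 2) := by
    intro s
    rw [← Finset.sum_fiberwise_of_maps_to (t := s.image fun n : ℕ => ⌊Real.log n - y⌋)
      (g := fun n : ℕ => ⌊Real.log n - y⌋) (fun n hn => Finset.mem_image_of_mem _ hn)]
    refine (Finset.sum_le_sum (fun k _ => fiber_bound y k _ (fun n hn => (Finset.mem_filter.1 hn).2))).trans ?_
    rw [← Finset.mul_sum]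
    apply mul_le_mul_of_nonneg_left _ hCpos.le
    exact summable_int_weight.sum_le_tsum _ (fun k _ => by positivity)
  have hsum := summable_of_sum_le hnn hb
  exact ⟨hsum, hsum.tsum_le_of_sum_le hb⟩

lemma exists_G : ∃ G : ℂ → ℂ, ContinuousOn G {s | 1 ≤ s.re} ∧
    ∀ s : ℂ, 1 < s.re → LSeries (fun n => (vonMangoldt n : ℂ)) s = G s + 1 / (s - 1) := by
  refine ⟨vonMangoldt.LFunctionResidueClassAux (q := 1) 1,
    vonMangoldt.continuousOn_LFunctionResidueClassAux 1, fun s hs => ?_⟩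
  have h := vonMangoldt.eqOn_LFunctionResidueClassAux (q := 1) (a := 1) isUnit_one
    (show s ∈ {s : ℂ | 1 < s.re} from hs)
  rw [h]
  have : (fun n : ℕ => ((vonMangoldt.residueClass (1 : ZMod 1) n : ℝ) : ℂ)) =
      fun n => ((vonMangoldt n : ℝ) : ℂ) := by
    ext n
    simp only [vonMangoldt.residueClass]
    rw [Set.indicator_of_mem]
    exact Subsingleton.elim _ _
  simp [this]

lemma summable_nonprime : Summable (fun n : ℕ => (if n.Prime then 0 else vonMangoldt n) / n) := by
  have h := vonMangoldt.summable_residueClass_non_primes_div (q := 1) (a := 1)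
  refine h.congr fun n => ?_
  congr 1
  split_ifs
  · rfl
  · simp only [vonMangoldt.residueClass]
    rw [Set.indicator_of_mem]
    exact Subsingleton.elim _ _

open SchwartzMap FourierTransform

lemma schwartz_decay (f : 𝓢(ℝ, ℂ)) : ∃ C : ℝ, 0 ≤ C ∧ ∀ u : ℝ, ‖f u‖ ≤ C * (1 / (1 + u ^ 2)) := by
  refine ⟨SchwartzMap.seminorm ℝ 0 0 f + SchwartzMap.seminorm ℝ 2 0 f, by positivity, fun u => ?_⟩
  have h0 := norm_le_seminorm ℝ f u
  have h2 := norm_pow_mul_le_seminorm ℝ f 2 u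
  rw [mul_one_div, le_div_iff₀ (by positivity)]
  have : ‖u‖ ^ 2 = u ^ 2 := by simp
  rw [this] at h2
  nlinarith

lemma fourier_formula (g : 𝓢(ℝ, ℂ)) (u : ℝ) :
    𝓕 g u = ∫ t : ℝ, Complex.exp (↑(-2 * Real.pi * t * u) * Complex.I) * g t := by
  rw [fourier_coe, Real.fourier_real_eq_integral_exp_smul]; rfl

lemma norm_exp_mul_I' (x y : ℝ) : ‖Complex.exp (2 * Real.pi * Complex.I * x * y)‖ = 1 := by
  have : (2 * Real.pi * Complex.I * x * y : ℂ) = ((2 * Real.pi * x * y : ℝ) : ℂ) * Complex.I := by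
    push_cast; ring
  rw [this, Complex.norm_exp_ofReal_mul_I]

lemma sum_eq_integral (g : 𝓢(ℝ, ℂ)) (y σ : ℝ) (hσ : 1 < σ) :
    ∑' n : ℕ, (vonMangoldt n : ℂ) / (n : ℂ) ^ (σ : ℂ) * 𝓕 g (Real.log n - y) =
      ∫ t : ℝ, Complex.exp (2 * Real.pi * Complex.I * t * y) * g t *
        LSeries (fun n => (vonMangoldt n : ℂ)) (σ + 2 * Real.pi * Complex.I * t) := by
  set F : ℕ → ℝ → ℂ := fun n t => Complex.exp (2 * Real.pi * Complex.I * t * y) * g t *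
        LSeries.term (fun n => (vonMangoldt n : ℂ)) (σ + 2 * Real.pi * Complex.I * t) n with hF
  have hpt : ∀ (n : ℕ) (t : ℝ), F n t = (vonMangoldt n : ℂ) / (n : ℂ) ^ (σ : ℂ) *
      (Complex.exp (↑(-2 * Real.pi * t * (Real.log n - y)) * Complex.I) * g t) := by
    intro n t
    rcases eq_or_ne n 0 with rfl | hn
    · simp [hF]
    have hn' : (n : ℂ) ≠ 0 := by exact_mod_cast hn
    simp only [hF]
    rw [LSeries.term_of_ne_zero hn, Complex.cpow_def_of_ne_zero hn', Complex.cpow_def_of_ne_zero hn',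
      ← Complex.natCast_log, div_eq_mul_inv, div_eq_mul_inv, ← Complex.exp_neg, ← Complex.exp_neg]
    have : Complex.exp (2 * Real.pi * Complex.I * t * y) *
        Complex.exp (-(Real.log n * (σ + 2 * Real.pi * Complex.I * t))) =
        Complex.exp (-(Real.log n * σ)) *
        Complex.exp (↑(-2 * Real.pi * t * (Real.log n - y)) * Complex.I) := by
      rw [← Complex.exp_add, ← Complex.exp_add]
      congr 1
      push_cast
      ring
    linear_combination (g t * (vonMangoldt n : ℂ)) * this
  have hInt : ∀ n, Integrable (F n) := by
    intro n
    have : F n = fun t => (vonMangoldt n : ℂ) / (n : ℂ) ^ (σ : ℂ) *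
      (Complex.exp (↑(-2 * Real.pi * t * (Real.log n - y)) * Complex.I) * g t) := funext (hpt n)
    rw [this]
    apply Integrable.const_mul
    refine g.integrable.norm.mono' (by fun_prop) (ae_of_all _ fun t => ?_)
    rw [norm_mul, Complex.norm_exp_ofReal_mul_I, one_mul]
  have hnorm : ∀ (n : ℕ) (t : ℝ), ‖F n t‖ =
      ‖LSeries.term (fun n => (vonMangoldt n : ℂ)) σ n‖ * ‖g t‖ := by
    intro n t
    simp only [hF]
    rw [norm_mul, norm_mul, norm_exp_mul_I', one_mul, mul_comm, LSeries.norm_term_eq, LSeries.norm_term_eq]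
    simp
  have hS : Summable fun n => ∫ t, ‖F n t‖ := by
    simp_rw [hnorm, integral_const_mul]
    apply Summable.mul_right
    exact (LSeriesSummable_vonMangoldt (s := σ) (by simpa using hσ)).norm
  calc _ = ∑' n, ∫ t, F n t := by
        refine tsum_congr fun n => ?_
        rw [fourier_formula, ← integral_const_mul]
        exact integral_congr_ae (ae_of_all _ fun t => (hpt n t).symm)
    _ = ∫ t, ∑' n, F n t := integral_tsum_of_summable_integral_norm hInt hS
    _ = _ := by
        refine integral_congr_ae (ae_of_all _ fun t => ?_)
        simp only [hF]
        rw [tsum_mul_left]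
        rfl

lemma pole_integral (g : 𝓢(ℝ, ℂ)) (y σ : ℝ) (hσ : 1 < σ) :
    ∫ t : ℝ, Complex.exp (2 * Real.pi * Complex.I * t * y) * g t *
        (1 / (σ + 2 * Real.pi * Complex.I * t - 1)) =
      ∫ u in Set.Ioi (0 : ℝ), Complex.exp (-(u * (σ - 1))) * 𝓕 g (u - y) := by
  have h1 : ∀ t : ℝ, Complex.exp (2 * Real.pi * Complex.I * t * y) * g t *
        (1 / (σ + 2 * Real.pi * Complex.I * t - 1)) =
      ∫ u in Set.Ioi (0 : ℝ), Complex.exp (2 * Real.pi * Complex.I * t * y) * g t *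
        Complex.exp (-(σ + 2 * Real.pi * Complex.I * t - 1) * u) := by
    intro t
    rw [integral_const_mul, integral_exp_mul_complex_Ioi (by simp; linarith),
      Complex.ofReal_zero, mul_zero, Complex.exp_zero, neg_div_neg_eq]
  simp_rw [h1]
  rw [integral_integral_swap]
  · refine integral_congr_ae (ae_of_all _ fun u => ?_)
    simp only
    rw [fourier_formula, ← integral_const_mul]
    refine integral_congr_ae (ae_of_all _ fun t => ?_)
    simp only
    have : Complex.exp (2 * Real.pi * Complex.I * t * y) *
        Complex.exp (-(σ + 2 * Real.pi * Complex.I * t - 1) * u) =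
        Complex.exp (-(u * (σ - 1))) *
        Complex.exp (↑(-2 * Real.pi * t * (u - y)) * Complex.I) := by
      rw [← Complex.exp_add, ← Complex.exp_add]
      congr 1
      push_cast
      ring
    linear_combination g t * this
  · have hb : Integrable (fun z : ℝ × ℝ => ‖g z.1‖ * Real.exp (-(σ - 1) * z.2))
        (volume.prod (volume.restrict (Set.Ioi 0))) := by
      have h1 : Integrable (fun t => ‖g t‖) volume := g.integrable.norm
      have h2 : Integrable (fun u : ℝ => Real.exp (-(σ - 1) * u)) (volume.restrict (Set.Ioi 0)) :=
        exp_neg_integrableOn_Ioi 0 (by linarith)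
      exact h1.mul_prod h2
    refine hb.mono' ?_ (ae_of_all _ ?_)
    · apply Continuous.aestronglyMeasurable
      have := g.continuous
      simp only [Function.uncurry_def]
      fun_prop
    · rintro ⟨t, u⟩
      simp only [Function.uncurry_apply_pair]
      rw [norm_mul, norm_mul, norm_exp_mul_I', one_mul, Complex.norm_exp]
      simp

lemma limit_identity (G : ℂ → ℂ) (hGc : ContinuousOn G {s | 1 ≤ s.re})
    (hG : ∀ s : ℂ, 1 < s.re → LSeries (fun n => (vonMangoldt n : ℂ)) s = G s + 1 / (s - 1))
    (g : 𝓢(ℝ, ℂ)) (hg : HasCompactSupport g) (y : ℝ) :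
    ∑' n : ℕ, (vonMangoldt n : ℂ) / (n : ℂ) * 𝓕 g (Real.log n - y) =
      (∫ t : ℝ, Complex.exp (2 * Real.pi * Complex.I * t * y) * g t *
        G (1 + 2 * Real.pi * Complex.I * t)) + ∫ u in Set.Ioi (0 : ℝ), 𝓕 g (u - y) := by
  obtain ⟨B, hB, hBy⟩ := cheb_bound
  obtain ⟨C, hC, hdec⟩ := schwartz_decay (𝓕 g)
  have hmaps : ∀ σ : ℝ, 1 ≤ σ → ∀ t : ℝ,
      ((σ : ℂ) + 2 * Real.pi * Complex.I * t) ∈ {s : ℂ | 1 ≤ s.re} := by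
    intro σ hσ t
    simpa using hσ
  have hGcont : ∀ σ : ℝ, 1 ≤ σ → Continuous fun t : ℝ => G ((σ : ℂ) + 2 * Real.pi * Complex.I * t) :=
    fun σ hσ => hGc.comp_continuous (by fun_prop) (hmaps σ hσ)
  have hgc := g.continuous
  -- left side
  have hL : Tendsto (fun σ : ℝ => ∑' n : ℕ, (vonMangoldt n : ℂ) / (n : ℂ) ^ (σ : ℂ) *
      𝓕 g (Real.log n - y)) (𝓝[>] 1)
      (𝓝 (∑' n : ℕ, (vonMangoldt n : ℂ) / (n : ℂ) * 𝓕 g (Real.log n - y))) := by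
    refine tendsto_tsum_of_dominated_convergence
      (bound := fun n : ℕ => C * (vonMangoldt n / n * (1 / (1 + (Real.log n - y) ^ 2))))
      ((hBy y).1.mul_left C) ?_ ?_
    · intro n
      apply Tendsto.mul_const
      rcases eq_or_ne n 0 with rfl | hn
      · simp
      have hn' : (n : ℂ) ≠ 0 := by exact_mod_cast hn
      have : ContinuousAt (fun σ : ℝ => (vonMangoldt n : ℂ) / (n : ℂ) ^ (σ : ℂ)) 1 := by
        apply ContinuousAt.div continuousAt_const
        · apply ContinuousAt.const_cpow
          · fun_prop
          · exact Or.inl hn'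
        · simp [hn']
      have h2 := this.tendsto
      simp only [Complex.ofReal_one, Complex.cpow_one] at h2
      exact h2.mono_left nhdsWithin_le_nhds
    · filter_upwards [self_mem_nhdsWithin] with σ hσ n
      have hσ' : 1 < σ := hσ
      rcases eq_or_ne n 0 with rfl | hn
      · simp
      have hn1 : (1 : ℝ) ≤ n := by exact_mod_cast Nat.one_le_iff_ne_zero.2 hn
      rw [norm_mul, norm_div, Complex.norm_real, Real.norm_of_nonneg vonMangoldt_nonneg,
        Complex.norm_natCast_cpow_of_pos (Nat.pos_of_ne_zero hn), Complex.ofReal_re]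
      have h3 : vonMangoldt n / (n : ℝ) ^ σ ≤ vonMangoldt n / n := by
        apply div_le_div_of_nonneg_left vonMangoldt_nonneg (by positivity)
        calc (n : ℝ) = (n : ℝ) ^ (1 : ℝ) := (Real.rpow_one _).symm
          _ ≤ _ := Real.rpow_le_rpow_of_exponent_le hn1 hσ'.le
      have h4 : 0 ≤ vonMangoldt n / (n : ℝ) := div_nonneg vonMangoldt_nonneg (by positivity)
      calc _ ≤ (vonMangoldt n / n) * (C * (1 / (1 + (Real.log n - y) ^ 2))) :=
            mul_le_mul h3 (hdec _) (norm_nonneg _) h4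
        _ = _ := by ring
  -- right side 1
  have hR1 : Tendsto (fun σ : ℝ => ∫ t : ℝ, Complex.exp (2 * Real.pi * Complex.I * t * y) * g t *
        G (σ + 2 * Real.pi * Complex.I * t)) (𝓝[>] 1)
      (𝓝 (∫ t : ℝ, Complex.exp (2 * Real.pi * Complex.I * t * y) * g t *
        G (1 + 2 * Real.pi * Complex.I * t))) := by
    have hK : IsCompact (Set.Icc (1 : ℝ) 2 ×ˢ tsupport g) := isCompact_Icc.prod hg
    have hcont : ContinuousOn (fun z : ℝ × ℝ => G ((z.1 : ℂ) + 2 * Real.pi * Complex.I * z.2))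
        (Set.Icc (1 : ℝ) 2 ×ˢ tsupport g) := by
      apply hGc.comp (by fun_prop)
      rintro ⟨σ, t⟩ ⟨h1, _⟩
      exact hmaps σ h1.1 t
    obtain ⟨M, hM⟩ := hK.exists_bound_of_continuousOn hcont
    refine tendsto_integral_filter_of_dominated_convergence (fun t => ‖g t‖ * M) ?_ ?_ ?_ ?_
    · filter_upwards [self_mem_nhdsWithin] with σ hσ
      have := hGcont σ (le_of_lt hσ)
      exact (Continuous.mul (by fun_prop) this).aestronglyMeasurable
    · have : ∀ᶠ σ : ℝ in 𝓝[>] 1, σ < 2 := by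
        apply Filter.Eventually.filter_mono nhdsWithin_le_nhds
        exact gt_mem_nhds (by norm_num)
      filter_upwards [self_mem_nhdsWithin, this] with σ hσ hσ2
      refine ae_of_all _ fun t => ?_
      rw [norm_mul, norm_mul, norm_exp_mul_I', one_mul]
      by_cases ht : t ∈ tsupport g
      · exact mul_le_mul_of_nonneg_left (hM (σ, t) ⟨⟨le_of_lt hσ, hσ2.le⟩, ht⟩) (norm_nonneg _)
      · rw [image_eq_zero_of_notMem_tsupport ht]; simp
    · exact g.integrable.norm.mul_const M
    · refine ae_of_all _ fun t => ?_
      apply Tendsto.const_mul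
      have h1 : ContinuousWithinAt G {s | 1 ≤ s.re} (1 + 2 * Real.pi * Complex.I * t) := by
        apply hGc
        simp
      refine h1.tendsto.comp ?_
      apply tendsto_nhdsWithin_of_tendsto_nhds_of_eventually_within
      · have : Continuous fun σ : ℝ => (σ : ℂ) + 2 * Real.pi * Complex.I * t := by fun_prop
        have h := this.tendsto 1
        simp only [Complex.ofReal_one] at h
        exact h.mono_left nhdsWithin_le_nhds
      · filter_upwards [self_mem_nhdsWithin] with σ hσ
        exact hmaps σ (le_of_lt hσ) t
  have hR2 : Tendsto (fun σ : ℝ => ∫ u in Set.Ioi (0 : ℝ), Complex.exp (-(u * (σ - 1))) *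
      𝓕 g (u - y)) (𝓝[>] 1) (𝓝 (∫ u in Set.Ioi (0 : ℝ), 𝓕 g (u - y))) := by
    have hFc := (𝓕 g).continuous
    refine tendsto_integral_filter_of_dominated_convergence (fun u => ‖𝓕 g (u - y)‖) ?_ ?_ ?_ ?_
    · refine Eventually.of_forall fun σ => ?_
      apply Continuous.aestronglyMeasurable
      fun_prop
    · filter_upwards [self_mem_nhdsWithin] with σ hσ
      have hσ' : 1 < σ := hσ
      filter_upwards [ae_restrict_mem measurableSet_Ioi] with u hu
      have hu' : 0 < u := hu
      rw [norm_mul]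
      refine mul_le_of_le_one_left (norm_nonneg _) ?_
      rw [Complex.norm_exp]
      simp
      nlinarith
    · exact (((𝓕 g).integrable (μ := volume)).comp_sub_right y).norm.integrableOn
    · refine ae_of_all _ fun u => ?_
      have : Continuous fun σ : ℝ => Complex.exp (-(u * (σ - 1))) * 𝓕 g (u - y) := by fun_prop
      have h := this.tendsto 1
      simp only [Complex.ofReal_one, sub_self, mul_zero, neg_zero, Complex.exp_zero, one_mul] at h
      exact h.mono_left nhdsWithin_le_nhds
  refine tendsto_nhds_unique_of_eventuallyEq hL (hR1.add hR2) ?_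
  filter_upwards [self_mem_nhdsWithin] with σ hσ
  have hσ' : 1 < σ := hσ
  rw [sum_eq_integral g y σ hσ', ← pole_integral g y σ hσ', ← integral_add]
  · refine integral_congr_ae (ae_of_all _ fun t => ?_)
    simp only
    rw [hG _ (by simpa using hσ')]
    ring
  · have := hGcont σ hσ'.le
    apply Continuous.integrable_of_hasCompactSupport (Continuous.mul (by fun_prop) this)
    exact (hg.mul_left).mul_right
  · apply Continuous.integrable_of_hasCompactSupport
    · apply Continuous.mul (by fun_prop)
      apply Continuous.div continuous_const (by fun_prop)
      intro t h
      have := congrArg Complex.re h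
      simp at this
      linarith
    · exact (hg.mul_left).mul_right

/-- The Tauberian limit for kernels with compactly supported Fourier transform. -/
lemma tendsto_compact (g : 𝓢(ℝ, ℂ)) (hg : HasCompactSupport g) :
    Tendsto (fun y : ℝ => ∑' n : ℕ, (vonMangoldt n : ℂ) / (n : ℂ) * 𝓕 g (Real.log n - y)) atTop
      (𝓝 (∫ u, 𝓕 g u)) := by
  obtain ⟨G, hGc, hG⟩ := exists_G
  simp_rw [limit_identity G hGc hG g hg]
  rw [← zero_add (∫ u, 𝓕 g u)]
  refine Tendsto.add ?_ ?_
  · have h := (Real.tendsto_integral_exp_smul_cocompact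
      (fun t : ℝ => g t * G (1 + 2 * Real.pi * Complex.I * t))).comp
      (tendsto_neg_atTop_atBot.mono_right (atBot_le_cocompact))
    refine h.congr fun y => ?_
    refine integral_congr_ae (ae_of_all _ fun t => ?_)
    simp only
    rw [Circle.smul_def, Real.fourierChar_apply, smul_eq_mul, ← mul_assoc]
    congr 3
    push_cast
    ring
  · have h := (aecover_Ioi (μ := volume) (tendsto_neg_atTop_atBot (G := ℝ))).integral_tendsto_of_countably_generated
      ((𝓕 g).integrable (μ := volume))
    refine h.congr fun y => ?_
    rw [← integral_indicator measurableSet_Ioi, ← integral_indicator measurableSet_Ioi,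
      ← integral_sub_right_eq_self _ y]
    congr 1
    ext u
    simp only [Set.indicator, Set.mem_Ioi]
    congr 1
    simp

lemma norm_fourier_le' (h : ℝ → ℂ) (u : ℝ) : ‖𝓕 h u‖ ≤ ∫ t, ‖h t‖ := by
  rw [Real.fourier_real_eq_integral_exp_smul]
  refine (norm_integral_le_integral_norm _).trans (le_of_eq ?_)
  refine integral_congr_ae (ae_of_all _ fun t => ?_)
  simp only
  rw [norm_smul, Complex.norm_exp_ofReal_mul_I, one_mul]

/-- A smooth cutoff. -/
lemma exists_cutoff : ∃ χ : ℝ → ℝ, ContDiff ℝ (⊤ : ℕ∞) χ ∧ HasCompactSupport χ ∧ χ 0 = 1 := by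
  let b : ContDiffBump (0 : ℝ) := default
  exact ⟨b, b.contDiff, b.hasCompactSupport, b.one_of_mem_closedBall (by simp [b.rIn_pos.le])⟩

lemma approx (f : 𝓢(ℝ, ℂ)) (ε : ℝ) (hε : 0 < ε) : ∃ g : 𝓢(ℝ, ℂ), HasCompactSupport g ∧
    ∀ u : ℝ, ‖𝓕 g u - 𝓕 f u‖ ≤ ε * (1 / (1 + u ^ 2)) := by
  obtain ⟨χ, hχ, hχc, hχ0⟩ := exists_cutoff
  have hχd : Differentiable ℝ χ := hχ.differentiable (by simp)
  have hχ1 : ContDiff ℝ (⊤ : ℕ∞) (deriv χ) := ((contDiff_infty_iff_deriv).1 hχ).2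
  have hχ2 : ContDiff ℝ (⊤ : ℕ∞) (deriv (deriv χ)) := ((contDiff_infty_iff_deriv).1 hχ1).2
  have hχdiff : Differentiable ℝ (deriv χ) := hχ1.differentiable (by simp)
  obtain ⟨M0, hM0⟩ := hχc.exists_bound_of_continuous hχ.continuous
  obtain ⟨M1, hM1⟩ := hχc.deriv.exists_bound_of_continuous hχ1.continuous
  obtain ⟨M2, hM2⟩ := hχc.deriv.deriv.exists_bound_of_continuous hχ2.continuous
  have hM0' : 0 ≤ M0 := (norm_nonneg _).trans (hM0 0)
  have hM1' : 0 ≤ M1 := (norm_nonneg _).trans (hM1 0)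
  have hM2' : 0 ≤ M2 := (norm_nonneg _).trans (hM2 0)
  set f1 : 𝓢(ℝ, ℂ) := derivCLM ℂ ℂ f with hf1
  set f2 : 𝓢(ℝ, ℂ) := derivCLM ℂ ℂ f1 with hf2
  have hd1 : ∀ t, HasDerivAt f (f1 t) t := fun t => by
    simpa [hf1] using f.differentiableAt.hasDerivAt
  have hd2 : ∀ t, HasDerivAt f1 (f2 t) t := fun t => by
    simpa [hf2] using f1.differentiableAt.hasDerivAt
  -- the difference and its derivatives
  set h0 : ℝ → ℝ → ℂ := fun δ t => ((1 - χ (δ * t) : ℝ) : ℂ) * f t with hh0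
  set h1 : ℝ → ℝ → ℂ := fun δ t => ((1 - χ (δ * t) : ℝ) : ℂ) * f1 t -
    ((δ * deriv χ (δ * t) : ℝ) : ℂ) * f t with hh1
  set h2 : ℝ → ℝ → ℂ := fun δ t => ((1 - χ (δ * t) : ℝ) : ℂ) * f2 t -
    2 * (((δ * deriv χ (δ * t) : ℝ) : ℂ) * f1 t) -
    ((δ ^ 2 * deriv (deriv χ) (δ * t) : ℝ) : ℂ) * f t with hh2
  have hD : ∀ δ t : ℝ, HasDerivAt (fun t : ℝ => ((1 - χ (δ * t) : ℝ) : ℂ))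
      (-((δ * deriv χ (δ * t) : ℝ) : ℂ)) t := by
    intro δ t
    have h : HasDerivAt (fun t : ℝ => 1 - χ (δ * t)) (-(deriv χ (δ * t) * (δ * 1))) t :=
      ((hχd (δ * t)).hasDerivAt.comp t ((hasDerivAt_id t).const_mul δ)).const_sub 1
    convert h.ofReal_comp using 1
    push_cast; ring
  have hD' : ∀ δ t : ℝ, HasDerivAt (fun t : ℝ => ((δ * deriv χ (δ * t) : ℝ) : ℂ))
      (((δ ^ 2 * deriv (deriv χ) (δ * t) : ℝ) : ℂ)) t := by
    intro δ t
    have h : HasDerivAt (fun t : ℝ => δ * deriv χ (δ * t)) (δ * (deriv (deriv χ) (δ * t) * (δ * 1))) t :=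
      ((hχdiff (δ * t)).hasDerivAt.comp t ((hasDerivAt_id t).const_mul δ)).const_mul δ
    convert h.ofReal_comp using 1
    push_cast; ring
  have hder0 : ∀ δ t, HasDerivAt (h0 δ) (h1 δ t) t := by
    intro δ t
    have h := (hD δ t).mul (hd1 t)
    refine HasDerivAt.congr_deriv (f := h0 δ) h ?_
    simp only [h1]; ring
  have hder1 : ∀ δ t, HasDerivAt (h1 δ) (h2 δ t) t := by
    intro δ t
    have h := ((hD δ t).mul (hd2 t)).sub ((hD' δ t).mul (hd1 t))
    refine HasDerivAt.congr_deriv (f := h1 δ) h ?_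
    simp only [h2]; ring
  have hc := f.continuous
  have hc1 := f1.continuous
  have hc2 := f2.continuous
  have hx0 := hχ.continuous
  have hx1 := hχ1.continuous
  have hx2 := hχ2.continuous
  -- integrability
  have hb0 : ∀ δ t, ‖h0 δ t‖ ≤ (1 + M0) * ‖f t‖ := by
    intro δ t
    simp only [hh0]
    rw [norm_mul, Complex.norm_real]
    gcongr
    exact (norm_sub_le _ _).trans (by simpa using hM0 (δ * t))
  have hb1 : ∀ δ t, 0 ≤ δ → δ ≤ 1 → ‖h1 δ t‖ ≤ (1 + M0) * ‖f1 t‖ + M1 * ‖f t‖ := by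
    intro δ t hδ hδ1
    simp only [hh1]
    refine (norm_sub_le _ _).trans ?_
    rw [norm_mul, norm_mul, Complex.norm_real, Complex.norm_real]
    gcongr
    · exact (norm_sub_le _ _).trans (by simpa using hM0 (δ * t))
    · rw [norm_mul, Real.norm_of_nonneg hδ]
      exact (mul_le_of_le_one_left (norm_nonneg _) hδ1).trans (hM1 _)
  have hb2 : ∀ δ t, 0 ≤ δ → δ ≤ 1 →
      ‖h2 δ t‖ ≤ (1 + M0) * ‖f2 t‖ + 2 * (M1 * ‖f1 t‖) + M2 * ‖f t‖ := by
    intro δ t hδ hδ1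
    simp only [hh2]
    refine (norm_sub_le _ _).trans (add_le_add ((norm_sub_le _ _).trans (add_le_add ?_ ?_)) ?_)
    · rw [norm_mul, Complex.norm_real]
      gcongr
      exact (norm_sub_le _ _).trans (by simpa using hM0 (δ * t))
    · rw [norm_mul, norm_mul, Complex.norm_real, Complex.norm_ofNat]
      gcongr
      rw [norm_mul, Real.norm_of_nonneg hδ]
      exact (mul_le_of_le_one_left (norm_nonneg _) hδ1).trans (hM1 _)
    · rw [norm_mul, Complex.norm_real]
      gcongr
      rw [norm_mul, Real.norm_of_nonneg (by positivity)]
      exact (mul_le_of_le_one_left (norm_nonneg _) (pow_le_one₀ hδ hδ1)).trans (hM2 _)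
  have hfi := (f.integrable (μ := volume)).norm
  have hfi1 := (f1.integrable (μ := volume)).norm
  have hfi2 := (f2.integrable (μ := volume)).norm
  have hI0 : Integrable (fun t => (1 + M0) * ‖f t‖) := hfi.const_mul _
  have hI1 : Integrable (fun t => (1 + M0) * ‖f1 t‖ + M1 * ‖f t‖) :=
    (hfi1.const_mul _).add (hfi.const_mul _)
  have hI2 : Integrable (fun t => (1 + M0) * ‖f2 t‖ + 2 * (M1 * ‖f1 t‖) + M2 * ‖f t‖) :=
    ((hfi2.const_mul _).add ((hfi1.const_mul _).const_mul _)).add (hfi.const_mul _)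
  have hcont0 : ∀ δ, Continuous (h0 δ) := fun δ => by simp only [hh0]; fun_prop
  have hcont1 : ∀ δ, Continuous (h1 δ) := fun δ => by simp only [hh1]; fun_prop
  have hcont2 : ∀ δ, Continuous (h2 δ) := fun δ => by simp only [hh2]; fun_prop
  have hIc : ∀ᶠ δ : ℝ in 𝓝[>] 0, 0 < δ ∧ δ ≤ 1 := by
    have : ∀ᶠ δ : ℝ in 𝓝[>] 0, δ < 1 := by
      apply Filter.Eventually.filter_mono nhdsWithin_le_nhds
      exact gt_mem_nhds (by norm_num)
    filter_upwards [self_mem_nhdsWithin, this] with δ h1 h2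
    exact ⟨h1, h2.le⟩
  have hlim0 : Tendsto (fun δ => ∫ t, ‖h0 δ t‖) (𝓝[>] 0) (𝓝 0) := by
    have : ∫ t : ℝ, (0 : ℝ) = 0 := by simp
    suffices H : Tendsto (fun δ => ∫ t, ‖h0 δ t‖) (𝓝[>] 0) (𝓝 (∫ t : ℝ, (0 : ℝ))) by
      rwa [this] at H
    refine tendsto_integral_filter_of_dominated_convergence _ ?_ ?_ hI0 ?_
    · exact Eventually.of_forall fun δ => (hcont0 δ).norm.aestronglyMeasurable
    · exact Eventually.of_forall fun δ => ae_of_all _ fun t => by simpa using hb0 δ t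
    · refine ae_of_all _ fun t => ?_
      have hc : Continuous fun δ => ‖h0 δ t‖ := by simp only [hh0]; fun_prop
      have := hc.tendsto 0
      simp only [hh0, zero_mul, hχ0] at this
      simp only [sub_self, Complex.ofReal_zero, zero_mul, norm_zero] at this
      exact this.mono_left nhdsWithin_le_nhds
  have hlim2 : Tendsto (fun δ => ∫ t, ‖h2 δ t‖) (𝓝[>] 0) (𝓝 0) := by
    have : ∫ t : ℝ, (0 : ℝ) = 0 := by simp
    suffices H : Tendsto (fun δ => ∫ t, ‖h2 δ t‖) (𝓝[>] 0) (𝓝 (∫ t : ℝ, (0 : ℝ))) by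
      rwa [this] at H
    refine tendsto_integral_filter_of_dominated_convergence _ ?_ ?_ hI2 ?_
    · exact Eventually.of_forall fun δ => (hcont2 δ).norm.aestronglyMeasurable
    · filter_upwards [hIc] with δ hδ
      exact ae_of_all _ fun t => by simpa using hb2 δ t hδ.1.le hδ.2
    · refine ae_of_all _ fun t => ?_
      have hc : Continuous fun δ => ‖h2 δ t‖ := by simp only [hh2]; fun_prop
      have := hc.tendsto 0
      have hz : h2 0 t = 0 := by simp [hh2, hχ0]
      rw [hz, norm_zero] at this
      exact this.mono_left nhdsWithin_le_nhds
  have hlim : Tendsto (fun δ => (∫ t, ‖h0 δ t‖) + ∫ t, ‖h2 δ t‖) (𝓝[>] 0) (𝓝 0) := by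
    simpa using hlim0.add hlim2
  obtain ⟨δ, hδ, hδ0, hδ1⟩ := ((hlim.eventually (gt_mem_nhds hε)).and hIc).exists
  -- the approximant
  have hgs : ContDiff ℝ (⊤ : ℕ∞) (fun t => ((χ (δ * t) : ℝ) : ℂ) * f t) := by
    apply ContDiff.mul
    · apply Complex.ofRealCLM.contDiff.comp
      exact hχ.comp (contDiff_const.mul contDiff_id)
    · exact f.smooth ⊤
  have hgc : HasCompactSupport (fun t => ((χ (δ * t) : ℝ) : ℂ) * f t) := by
    apply HasCompactSupport.mul_right
    have : HasCompactSupport (fun t => χ (δ * t)) := by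
      exact hχc.comp_homeomorph (Homeomorph.mulLeft₀ δ hδ0.ne')
    exact this.comp_left (g := fun x : ℝ => (x : ℂ)) Complex.ofReal_zero
  refine ⟨hgc.toSchwartzMap hgs, hgc, fun u => ?_⟩
  set g := hgc.toSchwartzMap hgs with hg
  have hgapp : ∀ t, g t = ((χ (δ * t) : ℝ) : ℂ) * f t := fun t => rfl
  have hh : 𝓕 g u - 𝓕 f u = - 𝓕 (h0 δ) u := by
    have h3 : (f - g : 𝓢(ℝ, ℂ)) = (h0 δ : ℝ → ℂ) := by
      ext t
      rw [_root_.sub_apply, hgapp]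
      simp only [hh0]
      push_cast; ring
    have h4 : 𝓕 (f - g) = 𝓕 f - 𝓕 g := map_sub (fourierTransformCLM ℂ) f g
    rw [← h3, ← fourier_coe, h4, _root_.sub_apply]
    ring
  have hInt0 : Integrable (h0 δ) := hI0.mono' (hcont0 δ).aestronglyMeasurable (ae_of_all _ (hb0 δ))
  have hInt1 : Integrable (h1 δ) := hI1.mono' (hcont1 δ).aestronglyMeasurable
    (ae_of_all _ fun t => hb1 δ t hδ0.le hδ1)
  have hInt2 : Integrable (h2 δ) := hI2.mono' (hcont2 δ).aestronglyMeasurable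
    (ae_of_all _ fun t => hb2 δ t hδ0.le hδ1)
  have e0 : deriv (h0 δ) = h1 δ := funext fun t => (hder0 δ t).deriv
  have e1 : deriv (h1 δ) = h2 δ := funext fun t => (hder1 δ t).deriv
  have F1 := Real.fourier_deriv hInt0 (fun t => (hder0 δ t).differentiableAt) (e0 ▸ hInt1)
  have F2 := Real.fourier_deriv hInt1 (fun t => (hder1 δ t).differentiableAt) (e1 ▸ hInt2)
  rw [e0] at F1
  rw [e1, F1] at F2
  have F2u := congrFun F2 u
  have n0 : ‖𝓕 (h0 δ) u‖ ≤ ∫ t, ‖h0 δ t‖ := norm_fourier_le' _ _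
  have n2 : ‖𝓕 (h2 δ) u‖ ≤ ∫ t, ‖h2 δ t‖ := norm_fourier_le' _ _
  rw [F2u] at n2
  simp only [norm_smul, norm_mul, Complex.norm_I, Complex.norm_real, Complex.norm_ofNat] at n2
  rw [hh, norm_neg, mul_one_div, le_div_iff₀ (by positivity)]
  have hpi : 1 ≤ 2 * ‖Real.pi‖ := by
    rw [Real.norm_of_nonneg Real.pi_pos.le]; linarith [Real.pi_gt_three]
  have hsq : ‖u‖ * ‖u‖ = u ^ 2 := by rw [← sq]; simp
  have : ‖𝓕 (h0 δ) u‖ * u ^ 2 ≤ ∫ t, ‖h2 δ t‖ := by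
    refine le_trans ?_ n2
    rw [← hsq]
    have h5 : 0 ≤ ‖𝓕 (h0 δ) u‖ * (‖u‖ * ‖u‖) := by positivity
    have h6 : 1 ≤ (2 * ‖Real.pi‖) * (2 * ‖Real.pi‖) := by nlinarith
    calc _ ≤ (2 * ‖Real.pi‖) * (2 * ‖Real.pi‖) * (‖𝓕 (h0 δ) u‖ * (‖u‖ * ‖u‖)) := by
          exact le_mul_of_one_le_left h5 h6
      _ = _ := by ring
  linarith

/-- The Tauberian limit for all Schwartz kernels. -/
lemma tendsto_schwartz (K : 𝓢(ℝ, ℂ)) :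
    Tendsto (fun y : ℝ => ∑' n : ℕ, (vonMangoldt n : ℂ) / (n : ℂ) * K (Real.log n - y)) atTop
      (𝓝 (∫ u, K u)) := by
  obtain ⟨B, hB, hBy⟩ := cheb_bound
  have hsum : ∀ (f : 𝓢(ℝ, ℂ)) (y : ℝ),
      Summable fun n : ℕ => (vonMangoldt n : ℂ) / (n : ℂ) * f (Real.log n - y) := by
    intro f y
    obtain ⟨C, hC, hdec⟩ := schwartz_decay f
    refine Summable.of_norm_bounded ((hBy y).1.mul_left C) fun n => ?_
    have h4 : 0 ≤ vonMangoldt n / (n : ℝ) := div_nonneg vonMangoldt_nonneg (by positivity)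
    rw [norm_mul, norm_div, Complex.norm_real, Real.norm_of_nonneg vonMangoldt_nonneg,
      Complex.norm_natCast]
    calc _ ≤ (vonMangoldt n / n) * (C * (1 / (1 + (Real.log n - y) ^ 2))) :=
          mul_le_mul_of_nonneg_left (hdec _) h4
      _ = _ := by ring
  rw [Metric.tendsto_atTop]
  intro ε hε
  set η := ε / (2 * (B + Real.pi)) with hη
  have hpi := Real.pi_pos
  have hη0 : 0 < η := by positivity
  obtain ⟨g, hgc, hg⟩ := approx (𝓕⁻ K) η hη0
  have hinv : 𝓕 (𝓕⁻ K) = K := FourierTransform.fourier_fourierInv_eq K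
  rw [hinv] at hg
  obtain ⟨Y, hY⟩ := Metric.tendsto_atTop.1 (tendsto_compact g hgc) (ε / 2) (by positivity)
  refine ⟨Y, fun y hy => ?_⟩
  have h1 := hY y hy
  rw [dist_eq_norm] at h1 ⊢
  have h2 : ‖(∑' n : ℕ, (vonMangoldt n : ℂ) / (n : ℂ) * 𝓕 g (Real.log n - y)) -
      ∑' n : ℕ, (vonMangoldt n : ℂ) / (n : ℂ) * K (Real.log n - y)‖ ≤ η * B := by
    rw [← (hsum _ y).tsum_sub (hsum _ y)]
    refine (tsum_of_norm_bounded ((hBy y).1.mul_left η).hasSum fun n => ?_).trans ?_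
    · have h4 : 0 ≤ vonMangoldt n / (n : ℝ) := div_nonneg vonMangoldt_nonneg (by positivity)
      rw [← mul_sub, norm_mul, norm_div, Complex.norm_real, Real.norm_of_nonneg vonMangoldt_nonneg,
        Complex.norm_natCast]
      calc _ ≤ (vonMangoldt n / n) * (η * (1 / (1 + (Real.log n - y) ^ 2))) :=
            mul_le_mul_of_nonneg_left (hg _) h4
        _ = _ := by ring
    · rw [tsum_mul_left]
      exact mul_le_mul_of_nonneg_left (hBy y).2 hη0.le
  have h3 : ‖(∫ u, 𝓕 g u) - ∫ u, K u‖ ≤ η * Real.pi := by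
    rw [← integral_sub (𝓕 g).integrable K.integrable]
    refine (norm_integral_le_of_norm_le ?_ (ae_of_all _ hg)).trans ?_
    · simp_rw [one_div]
      exact integrable_inv_one_add_sq.const_mul η
    · simp_rw [one_div]
      rw [integral_const_mul, integral_univ_inv_one_add_sq]
  have h5 : η * B + η * Real.pi = ε / 2 := by rw [hη]; field_simp
  calc _ = ‖((∑' n : ℕ, (vonMangoldt n : ℂ) / (n : ℂ) * 𝓕 g (Real.log n - y)) - ∫ u, 𝓕 g u) -
      ((∑' n : ℕ, (vonMangoldt n : ℂ) / (n : ℂ) * 𝓕 g (Real.log n - y)) -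
      ∑' n : ℕ, (vonMangoldt n : ℂ) / (n : ℂ) * K (Real.log n - y)) +
      ((∫ u, 𝓕 g u) - ∫ u, K u)‖ := by congr 1; ring
    _ ≤ _ := (norm_add_le _ _).trans (add_le_add (norm_sub_le _ _) le_rfl)
    _ < ε := by linarith

/-- The family of kernels. -/
noncomputable def Fk (m : ℕ) (u : ℝ) : ℝ := Real.exp (m * u - Real.exp u)

lemma Fk_hasDerivAt (m : ℕ) (u : ℝ) : HasDerivAt (Fk m) (m * Fk m u - Fk (m + 1) u) u := by
  have h := (((hasDerivAt_id u).const_mul (m : ℝ)).sub (Real.hasDerivAt_exp u)).exp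
  refine HasDerivAt.congr_deriv (f := Fk m) h ?_
  simp only [Fk, id]
  have : ((m + 1 : ℕ) : ℝ) * u - Real.exp u = (m * u - Real.exp u) + u := by push_cast; ring
  rw [this, Real.exp_add (m * u - Real.exp u) u]
  simp only [Pi.sub_apply]
  ring

lemma Fk_smooth (m : ℕ) : ContDiff ℝ (⊤ : ℕ∞) (Fk m) := by
  unfold Fk
  fun_prop

lemma pow_mul_exp_le (N : ℕ) (x : ℝ) (hx : 0 ≤ x) : x ^ N * Real.exp (-x) ≤ N.factorial := by
  have h := Real.pow_div_factorial_le_exp x hx N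
  rw [Real.exp_neg, ← div_eq_mul_inv, div_le_iff₀ (Real.exp_pos _)]
  rw [div_le_iff₀ (by positivity)] at h
  linarith

lemma Fk_pos (m : ℕ) (u : ℝ) : 0 < Fk m u := Real.exp_pos _

lemma Fk_decay (m : ℕ) (hm : 1 ≤ m) (k : ℕ) : ∃ C : ℝ, ∀ u, |u| ^ k * Fk m u ≤ C := by
  refine ⟨max (k.factorial : ℝ) (k.factorial * (m + 1).factorial), fun u => ?_⟩
  rcases le_total u 0 with hu | hu
  · refine le_trans ?_ (le_max_left _ _)
    rw [abs_of_nonpos hu]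
    refine le_trans ?_ (pow_mul_exp_le k (-u) (by linarith))
    rw [neg_neg]
    apply mul_le_mul_of_nonneg_left _ (pow_nonneg (by linarith) _)
    unfold Fk
    apply Real.exp_le_exp.2
    have : (1 : ℝ) ≤ m := by exact_mod_cast hm
    nlinarith [Real.exp_pos u]
  · refine le_trans ?_ (le_max_right _ _)
    rw [abs_of_nonneg hu]
    have h1 := Real.pow_div_factorial_le_exp u hu k
    rw [div_le_iff₀ (by positivity)] at h1
    have h2 := pow_mul_exp_le (m + 1) (Real.exp u) (Real.exp_pos _).le
    have h3 : Fk m u = Real.exp u ^ m * Real.exp (-Real.exp u) := by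
      unfold Fk
      rw [sub_eq_add_neg, Real.exp_add, ← Real.exp_nat_mul]
    calc u ^ k * Fk m u ≤ (Real.exp u * k.factorial) * Fk m u :=
          mul_le_mul_of_nonneg_right h1 (Real.exp_pos _).le
      _ = k.factorial * (Real.exp u ^ (m + 1) * Real.exp (-Real.exp u)) := by
          rw [h3]; ring
      _ ≤ _ := mul_le_mul_of_nonneg_left h2 (by positivity)

lemma Fk_decay6 : ∃ C : ℝ, 0 < C ∧ ∀ u, (1 + u ^ 2) ^ 2 * Fk 3 u ≤ C * (1 / (1 + u ^ 2)) := by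
  obtain ⟨C0, h0⟩ := Fk_decay 3 (by norm_num) 0
  obtain ⟨C2, h2⟩ := Fk_decay 3 (by norm_num) 2
  obtain ⟨C4, h4⟩ := Fk_decay 3 (by norm_num) 4
  obtain ⟨C6, h6⟩ := Fk_decay 3 (by norm_num) 6
  refine ⟨max 1 (C0 + 3 * C2 + 3 * C4 + C6), by positivity, fun u => ?_⟩
  rw [mul_one_div, le_div_iff₀ (by positivity)]
  refine le_trans ?_ (le_max_right _ _)
  have g0 := h0 u
  have g2 := h2 u
  have g4 := h4 u
  have g6 := h6 u
  have e4 : |u| ^ 4 = u ^ 4 := by rw [show 4 = 2 * 2 from rfl, pow_mul, sq_abs, ← pow_mul]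
  have e6 : |u| ^ 6 = u ^ 6 := by rw [show 6 = 2 * 3 from rfl, pow_mul, sq_abs, ← pow_mul]
  rw [sq_abs] at g2
  rw [e4] at g4
  rw [e6] at g6
  rw [pow_zero] at g0
  nlinarith

/-- Complex version of the kernels. -/
noncomputable def Gk (m : ℕ) (u : ℝ) : ℂ := (Fk m u : ℂ)

lemma Gk_smooth (m : ℕ) : ContDiff ℝ (⊤ : ℕ∞) (Gk m) :=
  Complex.ofRealCLM.contDiff.comp (Fk_smooth m)

lemma Gk_deriv (m : ℕ) : deriv (Gk m) = fun u => (m : ℂ) * Gk m u - Gk (m + 1) u := by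
  ext u
  have h := (Fk_hasDerivAt m u).ofReal_comp
  have h2 : HasDerivAt (Gk m) _ u := h
  rw [h2.deriv]
  simp [Gk]

lemma Gk_decay (n : ℕ) : ∀ (m : ℕ), 1 ≤ m → ∀ k : ℕ, ∃ C : ℝ, ∀ u,
    |u| ^ k * ‖iteratedDeriv n (Gk m) u‖ ≤ C := by
  induction n with
  | zero =>
    intro m hm k
    obtain ⟨C, hC⟩ := Fk_decay m hm k
    refine ⟨C, fun u => ?_⟩
    simpa [Gk, abs_of_pos (Fk_pos m u)] using hC u
  | succ n ih =>
    intro m hm k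
    obtain ⟨C1, h1⟩ := ih m hm k
    obtain ⟨C2, h2⟩ := ih (m + 1) (by omega) k
    refine ⟨m * C1 + C2, fun u => ?_⟩
    have s1 : ContDiffAt ℝ n (Gk m) u := ((Gk_smooth m).of_le (by exact_mod_cast le_top)).contDiffAt
    have s2 : ContDiffAt ℝ n (Gk (m + 1)) u :=
      ((Gk_smooth (m + 1)).of_le (by exact_mod_cast le_top)).contDiffAt
    rw [iteratedDeriv_succ', Gk_deriv, iteratedDeriv_fun_sub (contDiffAt_const.mul s1) s2,
      iteratedDeriv_const_mul_field]
    have h3 : ‖(m : ℂ) * iteratedDeriv n (Gk m) u - iteratedDeriv n (Gk (m + 1)) u‖ ≤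
        m * ‖iteratedDeriv n (Gk m) u‖ + ‖iteratedDeriv n (Gk (m + 1)) u‖ := by
      refine (norm_sub_le _ _).trans ?_
      rw [norm_mul, Complex.norm_natCast]
    calc _ ≤ |u| ^ k * (m * ‖iteratedDeriv n (Gk m) u‖ + ‖iteratedDeriv n (Gk (m + 1)) u‖) :=
          mul_le_mul_of_nonneg_left h3 (by positivity)
      _ = m * (|u| ^ k * ‖iteratedDeriv n (Gk m) u‖) +
          |u| ^ k * ‖iteratedDeriv n (Gk (m + 1)) u‖ := by ring
      _ ≤ _ := add_le_add (mul_le_mul_of_nonneg_left (h1 u) (by positivity)) (h2 u)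

/-- The kernel as a Schwartz function. -/
noncomputable def K0 : 𝓢(ℝ, ℂ) where
  toFun := Gk 3
  smooth' := Gk_smooth 3
  decay' := by
    intro k n
    obtain ⟨C, hC⟩ := Gk_decay n 3 (by norm_num) k
    refine ⟨C, fun u => ?_⟩
    rw [norm_iteratedFDeriv_eq_norm_iteratedDeriv]
    exact hC u

lemma K0_apply (u : ℝ) : K0 u = (Fk 3 u : ℂ) := rfl

lemma integral_K0 : ∫ u, K0 u = 2 := by
  have hInt : Integrable (fun u => Fk 3 u) := by
    have h := (K0.integrable (μ := volume)).re
    exact h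
  have h1 : ∫ u, Fk 3 u = 0 - (-2) := by
    have e : ∀ x : ℝ, Real.exp x = Real.exp x := fun _ => rfl
    set A : ℝ → ℝ := fun x => -(x ^ 2 * Real.exp (-x) + 2 * (x ^ 1 * Real.exp (-x)) +
      2 * (x ^ 0 * Real.exp (-x))) with hA
    refine integral_of_hasDerivAt_of_tendsto (f := fun u => A (Real.exp u)) ?_ hInt ?_ ?_
    · intro u
      have hA' : ∀ x : ℝ, HasDerivAt A (x ^ 2 * Real.exp (-x)) x := by
        intro x
        have he : HasDerivAt (fun x : ℝ => Real.exp (-x)) (Real.exp (-x) * (-1)) x :=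
          (hasDerivAt_neg x).exp
        have h := (((hasDerivAt_pow 2 x).mul he).add (((hasDerivAt_pow 1 x).mul he).const_mul 2)).add
          (((hasDerivAt_pow 0 x).mul he).const_mul 2)
        refine HasDerivAt.congr_deriv (f := A) h.neg ?_
        norm_num
        ring
      have h := (hA' (Real.exp u)).comp u (Real.hasDerivAt_exp u)
      refine HasDerivAt.congr_deriv (f := fun u => A (Real.exp u)) h ?_
      unfold Fk
      rw [sub_eq_add_neg, Real.exp_add, Real.exp_nat_mul]
      ring
    · have : Continuous A := by simp only [hA]; fun_prop
      have h := (this.tendsto 0).comp Real.tendsto_exp_atBot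
      have hz : A 0 = -2 := by simp [hA]
      rw [hz] at h
      exact h
    · have h : Tendsto A atTop (𝓝 0) := by
        have := (((Real.tendsto_pow_mul_exp_neg_atTop_nhds_zero 2).add
          ((Real.tendsto_pow_mul_exp_neg_atTop_nhds_zero 1).const_mul 2)).add
          ((Real.tendsto_pow_mul_exp_neg_atTop_nhds_zero 0).const_mul 2)).neg
        simpa [hA] using this
      exact h.comp Real.tendsto_exp_atTop
  simp_rw [K0_apply]
  rw [integral_complex_ofReal, h1]
  norm_num

lemma tendsto_vonMangoldt :
    Tendsto (fun y : ℝ => ∑' n : ℕ, vonMangoldt n / n * Fk 3 (Real.log n - y)) atTop (𝓝 2) := by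
  have h := tendsto_schwartz K0
  rw [integral_K0] at h
  have h2 := (Complex.continuous_re.tendsto _).comp h
  simp only [Complex.re_ofNat] at h2
  refine h2.congr fun y => ?_
  simp only [Function.comp, K0_apply]
  rw [← Complex.ofReal_re (∑' n : ℕ, vonMangoldt n / n * Fk 3 (Real.log n - y)), Complex.ofReal_tsum]
  congr 1
  refine tsum_congr fun n => ?_
  push_cast
  rfl


lemma Fk3_eq (n : ℕ) (hn : 0 < n) (t : ℝ) (ht : 0 < t) :
    Fk 3 (Real.log n - Real.log (1 / t)) = (n * t) ^ 3 * Real.exp (-(n * t)) := by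
  have hn' : (0 : ℝ) < n := by exact_mod_cast hn
  have h1 : Real.log n - Real.log (1 / t) = Real.log (n * t) := by
    rw [Real.log_mul hn'.ne' ht.ne', one_div, Real.log_inv]; ring
  have hnt : 0 < (n : ℝ) * t := by positivity
  rw [h1, Fk, Real.exp_log hnt, sub_eq_add_neg, Real.exp_add]
  congr 1
  rw [show ((3 : ℕ) : ℝ) * Real.log (n * t) = Real.log (n * t) * ((3 : ℕ) : ℝ) by ring,
    ← Real.rpow_def_of_pos hnt, Real.rpow_natCast]

lemma tendsto_logt : Tendsto (fun t : ℝ => Real.log (1 / t)) (𝓝[>] 0) atTop := by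
  simp only [one_div]
  exact Real.tendsto_log_atTop.comp tendsto_inv_nhdsGT_zero

lemma tendsto_nonprime : Tendsto (fun t : ℝ => ∑' n : ℕ,
    (if n.Prime then 0 else vonMangoldt n) / n * Fk 3 (Real.log n - Real.log (1 / t)))
    (𝓝[>] 0) (𝓝 0) := by
  suffices h : Tendsto (fun t : ℝ => ∑' n : ℕ,
      (if n.Prime then 0 else vonMangoldt n) / n * Fk 3 (Real.log n - Real.log (1 / t)))
      (𝓝[>] 0) (𝓝 (∑' _ : ℕ, (0 : ℝ))) by simpa only [tsum_zero] using h
  refine tendsto_tsum_of_dominated_convergence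
    (bound := fun n : ℕ => (if n.Prime then 0 else vonMangoldt n) / n * 6)
    (summable_nonprime.mul_right 6) ?_ ?_
  · intro n
    rcases Nat.eq_zero_or_pos n with rfl | hn
    · simp
    · have : Tendsto (fun t : ℝ => (if n.Prime then 0 else vonMangoldt n) / n *
          ((n * t) ^ 3 * Real.exp (-(n * t)))) (𝓝[>] 0) (𝓝 0) := by
        have hc : Continuous (fun t : ℝ => (if n.Prime then 0 else vonMangoldt n) / n *
          ((n * t) ^ 3 * Real.exp (-(n * t)))) := by fun_prop
        have := hc.tendsto 0
        simp only [mul_zero, ne_eq, OfNat.ofNat_ne_zero, not_false_eq_true, zero_pow, zero_mul] at this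
        exact this.mono_left nhdsWithin_le_nhds
      refine this.congr' ?_
      filter_upwards [self_mem_nhdsWithin] with t ht
      rw [Fk3_eq n hn t ht]
  · filter_upwards [self_mem_nhdsWithin] with t ht n
    have ht' : (0 : ℝ) < t := ht
    rcases Nat.eq_zero_or_pos n with rfl | hn
    · simp
    · have hnn : 0 ≤ (if n.Prime then 0 else vonMangoldt n) / (n : ℝ) := by
        apply div_nonneg _ (Nat.cast_nonneg _)
        split_ifs
        · exact le_rfl
        · exact vonMangoldt_nonneg
      rw [Real.norm_eq_abs, abs_of_nonneg (mul_nonneg hnn (Fk_pos _ _).le)]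
      refine mul_le_mul_of_nonneg_left ?_ hnn
      rw [Fk3_eq n hn t ht]
      have := pow_mul_exp_le 3 (n * t) (by positivity)
      norm_num [Nat.factorial] at this
      simpa using this

lemma summable_full (y : ℝ) :
    Summable (fun n : ℕ => vonMangoldt n / n * Fk 3 (Real.log n - y)) := by
  obtain ⟨B, -, hB⟩ := cheb_bound
  obtain ⟨C, hC, hF⟩ := Fk_decay6
  refine Summable.of_nonneg_of_le (fun n => ?_) (fun n => ?_) ((hB y).1.mul_left C)
  · exact mul_nonneg (div_nonneg vonMangoldt_nonneg (Nat.cast_nonneg _)) (Fk_pos _ _).le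
  · have h1 := hF (Real.log n - y)
    have h2 : Fk 3 (Real.log n - y) ≤ C * (1 / (1 + (Real.log n - y) ^ 2)) := by
      refine le_trans ?_ h1
      refine le_mul_of_one_le_left (Fk_pos _ _).le ?_
      apply one_le_pow₀
      nlinarith [sq_nonneg (Real.log n - y)]
    have h3 : 0 ≤ vonMangoldt n / (n : ℝ) := div_nonneg vonMangoldt_nonneg (Nat.cast_nonneg _)
    calc _ ≤ vonMangoldt n / (n : ℝ) * (C * (1 / (1 + (Real.log n - y) ^ 2))) :=
          mul_le_mul_of_nonneg_left h2 h3
      _ = _ := by ring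

/-- The prime terms. -/
noncomputable def Pn (t : ℝ) (n : ℕ) : ℝ :=
  if n.Prime then vonMangoldt n / n * Fk 3 (Real.log n - Real.log (1 / t)) else 0

lemma summable_Pn (t : ℝ) : Summable (Pn t) := by
  have hnn : ∀ n : ℕ, 0 ≤ vonMangoldt n / n * Fk 3 (Real.log n - Real.log (1 / t)) := fun n =>
    mul_nonneg (div_nonneg vonMangoldt_nonneg (Nat.cast_nonneg _)) (Fk_pos _ _).le
  refine Summable.of_nonneg_of_le (fun n => ?_) (fun n => ?_) (summable_full (Real.log (1 / t)))
  · unfold Pn; split_ifs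
    · exact hnn n
    · exact le_rfl
  · unfold Pn; split_ifs
    · exact le_rfl
    · exact hnn n

lemma tendsto_Pn : Tendsto (fun t : ℝ => ∑' n : ℕ, Pn t n) (𝓝[>] 0) (𝓝 2) := by
  have h := (tendsto_vonMangoldt.comp tendsto_logt).sub tendsto_nonprime
  rw [sub_zero] at h
  refine h.congr fun t => ?_
  have e : ∀ n : ℕ, (if n.Prime then 0 else vonMangoldt n) / n *
      Fk 3 (Real.log n - Real.log (1 / t)) =
      vonMangoldt n / n * Fk 3 (Real.log n - Real.log (1 / t)) - Pn t n := by
    intro n; unfold Pn; split_ifs <;> simp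
  simp only [Function.comp]
  simp_rw [e]
  rw [(summable_full _).tsum_sub (summable_Pn t)]
  ring

lemma key_ineq (p l u L b : ℝ) (hl : 1 / 2 ≤ l) (hL : 0 < L) (hu : u = l - L)
    (hlp : l ≤ p) (hb0 : 0 ≤ b) (hb : b ≤ 2 / p) :
    |L / l * (1 - b) - 1| ≤ 9 * (1 + u ^ 2) ^ 2 / L := by
  have hl0 : 0 < l := by linarith
  have hp0 : 0 < p := by linarith
  set q := 1 + u ^ 2 with hq
  have hq1 : 1 ≤ q := by nlinarith [sq_nonneg u]
  have huq : |u| ≤ q / 2 := by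
    rw [hq]; nlinarith [sq_nonneg (|u| - 1), sq_abs u]
  have hLe : L ≤ 2 * q * l := by
    have : L = l - u := by linarith
    have := neg_abs_le u
    nlinarith
  have hinv : 1 / l ≤ 2 * q / L := by
    rw [div_le_div_iff₀ hl0 hL]; linarith
  have ha : L / l ≤ 2 * q := by rw [div_le_iff₀ hl0]; linarith
  have ha0 : 0 ≤ L / l := by positivity
  have h1 : |L / l - 1| ≤ q ^ 2 / L := by
    have : L / l - 1 = -u * (1 / l) := by field_simp; linarith
    rw [this, abs_mul, abs_neg, abs_of_pos (by positivity : 0 < 1 / l)]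
    calc |u| * (1 / l) ≤ q / 2 * (2 * q / L) := by gcongr
      _ = _ := by ring
  have h2 : L / l * b ≤ 8 * q ^ 2 / L := by
    have hb' : b ≤ 2 * (1 / l) := by
      refine hb.trans ?_
      rw [mul_one_div]; gcongr
    calc L / l * b ≤ 2 * q * (2 * (2 * q / L)) := by
          refine mul_le_mul ha (hb'.trans ?_) hb0 (by positivity)
          gcongr
      _ = _ := by ring
  have h3 : 0 ≤ L / l * b := by positivity
  have e : L / l * (1 - b) - 1 = (L / l - 1) - L / l * b := by ring
  rw [e]
  calc |(L / l - 1) - L / l * b| ≤ |L / l - 1| + |L / l * b| := abs_sub _ _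
    _ ≤ q ^ 2 / L + 8 * q ^ 2 / L := by rw [abs_of_nonneg h3]; gcongr
    _ = _ := by ring

/-- The normalised terms of the series. -/
noncomputable def Tn (t : ℝ) (n : ℕ) : ℝ :=
  Real.log (1 / t) * t ^ 3 * Real.exp (-(2 * t)) *
    (if n.Prime ∧ Odd n then (n : ℝ) * ((n : ℝ) - 1) * Real.exp (-t) ^ (n - 2) else 0)

lemma Tn_eq (t : ℝ) (ht : 0 < t) (n : ℕ) (hn : n.Prime) :
    ∃ b : ℝ, 0 ≤ b ∧ b ≤ 2 / n ∧
      Tn t n = Real.log (1 / t) / Real.log n * (1 - b) * Pn t n := by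
  have hn2 : 2 ≤ n := hn.two_le
  have hnR : (2 : ℝ) ≤ n := by exact_mod_cast hn2
  have hl : 0 < Real.log n := Real.log_pos (by linarith)
  by_cases ho : Odd n
  · refine ⟨1 / n, by positivity, by gcongr; norm_num, ?_⟩
    unfold Tn Pn
    rw [if_pos ⟨hn, ho⟩, if_pos hn, vonMangoldt_apply_prime hn, Fk3_eq n hn.pos t ht]
    have : Real.exp (-(n * t)) = Real.exp (-(2 * t)) * Real.exp (-t) ^ (n - 2) := by
      rw [← Real.exp_nat_mul, ← Real.exp_add, Nat.cast_sub hn2]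
      congr 1; push_cast; ring
    rw [this]
    have hn0 : (n : ℝ) ≠ 0 := by linarith
    field_simp
  · have : n = 2 := by
      rcases hn.eq_two_or_odd' with h | h
      · exact h
      · exact absurd h ho
    refine ⟨1, by norm_num, by rw [this]; norm_num, ?_⟩
    unfold Tn
    rw [if_neg (by tauto)]; simp

lemma diff_bound (C : ℝ) (hC : ∀ u, (1 + u ^ 2) ^ 2 * Fk 3 u ≤ C * (1 / (1 + u ^ 2)))
    (t : ℝ) (ht : 0 < t) (hL : 0 < Real.log (1 / t)) (n : ℕ) :
    |Tn t n - Pn t n| ≤ 9 * C / Real.log (1 / t) *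
      (vonMangoldt n / n * (1 / (1 + (Real.log n - Real.log (1 / t)) ^ 2))) := by
  have hC0 : 0 ≤ C := by
    have h := hC 0
    have := Fk_pos 3 0
    norm_num at h
    linarith
  have hv : 0 ≤ vonMangoldt n / (n : ℝ) := div_nonneg vonMangoldt_nonneg (Nat.cast_nonneg _)
  by_cases hn : n.Prime
  · obtain ⟨b, hb0, hb, e⟩ := Tn_eq t ht n hn
    have hnR : (2 : ℝ) ≤ n := by exact_mod_cast hn.two_le
    have hl : 1 / 2 ≤ Real.log n := by
      have h1 := Real.log_two_gt_d9
      have h2 := Real.log_le_log (by norm_num) hnR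
      linarith
    have hlp : Real.log n ≤ n := (Real.log_le_sub_one_of_pos (by linarith)).trans (by linarith)
    have hk := key_ineq n (Real.log n) _ _ b hl hL rfl hlp hb0 hb
    have hF := hC (Real.log n - Real.log (1 / t))
    rw [e, show ∀ a P : ℝ, a * P - P = (a - 1) * P by intros; ring, abs_mul]
    unfold Pn
    rw [if_pos hn, abs_of_nonneg (mul_nonneg hv (Fk_pos _ _).le)]
    set L := Real.log (1 / t)
    set u := Real.log n - L
    calc _ ≤ 9 * (1 + u ^ 2) ^ 2 / L * (vonMangoldt n / n * Fk 3 u) := by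
          refine mul_le_mul_of_nonneg_right hk (mul_nonneg hv (Fk_pos _ _).le)
      _ = 9 / L * (vonMangoldt n / n) * ((1 + u ^ 2) ^ 2 * Fk 3 u) := by ring
      _ ≤ 9 / L * (vonMangoldt n / n) * (C * (1 / (1 + u ^ 2))) := by gcongr
      _ = _ := by ring
  · have : Tn t n - Pn t n = 0 := by
      unfold Tn Pn
      rw [if_neg (by tauto), if_neg hn]; simp
    rw [this, abs_zero]
    positivity

lemma tendsto_Tn : Tendsto (fun t : ℝ => ∑' n : ℕ, Tn t n) (𝓝[>] 0) (𝓝 2) := by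
  obtain ⟨B, hB0, hB⟩ := cheb_bound
  obtain ⟨C, hC0, hC⟩ := Fk_decay6
  have hd : Tendsto (fun t : ℝ => ∑' n : ℕ, Tn t n - ∑' n : ℕ, Pn t n) (𝓝[>] 0) (𝓝 0) := by
    have hz : Tendsto (fun t : ℝ => 9 * C * B / Real.log (1 / t)) (𝓝[>] 0) (𝓝 0) :=
      tendsto_logt.const_div_atTop _
    refine squeeze_zero_norm' ?_ hz
    filter_upwards [self_mem_nhdsWithin, tendsto_logt.eventually_gt_atTop 0] with t ht hL
    have hb := diff_bound C hC t ht hL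
    obtain ⟨hs, hle⟩ := hB (Real.log (1 / t))
    have hs' := hs.mul_left (9 * C / Real.log (1 / t))
    have hsd : Summable (fun n => Tn t n - Pn t n) :=
      Summable.of_norm_bounded hs' hb
    have hsT : Summable (Tn t) := by
      have := hsd.add (summable_Pn t)
      simpa using this
    rw [← hsT.tsum_sub (summable_Pn t)]
    refine (tsum_of_norm_bounded hs'.hasSum hb).trans ?_
    rw [tsum_mul_left]
    calc _ ≤ 9 * C / Real.log (1 / t) * B := by gcongr
      _ = _ := by ring
  have := hd.add tendsto_Pn
  simpa using this

lemma tendsto_final : Tendsto (fun t : ℝ => (∑' p : ℕ, if p.Prime ∧ Odd p then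
      (p : ℝ) * ((p : ℝ) - 1) * Real.exp (-t) ^ (p - 2) else 0) * (t ^ 3 * Real.log (1 / t)))
      (𝓝[>] 0) (𝓝 2) := by
  have he : Tendsto (fun t : ℝ => Real.exp (2 * t)) (𝓝[>] 0) (𝓝 1) := by
    have hc : Continuous (fun t : ℝ => Real.exp (2 * t)) := by fun_prop
    have := hc.tendsto 0
    simp only [mul_zero, Real.exp_zero] at this
    exact this.mono_left nhdsWithin_le_nhds
  have h := he.mul tendsto_Tn
  rw [one_mul] at h
  refine h.congr fun t => ?_
  unfold Tn
  rw [tsum_mul_left, Real.exp_neg]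
  have := (Real.exp_pos (2 * t)).ne'
  field_simp

end PNTAux

/-- `f″(e^{−t}) ~ 2/(t³·log(1/t))` as `t → 0⁺`. -/
theorem fOdd''_exp_asymptotic :
    Tendsto (fun t : ℝ => fOdd'' (Real.exp (-t)) * (t ^ 3 * Real.log (1 / t)))
      (𝓝[>] 0) (𝓝 2) := by
  exact PNTAux.tendsto_final
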